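/- Let u : S¹ → ℝ be a smooth nonconstant function with mean zero, and let F = −u·u″ − H(u·H(u″)). Then F(θ) > 0 for every θ ∈ S¹. -/

import Mathlib

open MeasureTheory Real

/-- The `n`-th Fourier coefficient of a `2π`-periodic function `f : ℝ → ℝ`. -/
noncomputable def fourierC (f : ℝ → ℝ) (n : ℤ) : ℂ :=
  (1 / (2 * π)) * ∫ θ in (0:ℝ)..(2 * π), (f θ : ℂ) * Complex.exp (-Complex.I * (n : ℂ) * (θ : ℂ))

/-- The Hilbert transform on the circle, sending `Σ cₙ e^{inθ}` to `Σ (−i sgn n) cₙ e^{inθ}`. -/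
noncomputable def hilbertT (f : ℝ → ℝ) (θ : ℝ) : ℝ :=
  (∑' n : ℤ, -Complex.I * ((n.sign : ℤ) : ℂ) * fourierC f n *
    Complex.exp (Complex.I * (n : ℂ) * (θ : ℂ))).re

/-- The function `F = −u·u″ − H(u·H(u″))`. -/
noncomputable def Fmagic (u : ℝ → ℝ) (θ : ℝ) : ℝ :=
  -(u θ * deriv (deriv u) θ) - hilbertT (fun x => u x * hilbertT (deriv (deriv u)) x) θ

theorem hs_congr {ι E : Type} [AddCommMonoid E] [TopologicalSpace E] {f g : ι → E} {a b : E}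
    (h : HasSum f a) (hfg : ∀ i, g i = f i) (hab : b = a) : HasSum g b := by
  rw [funext hfg, hab]; exact h

open Filter Topology in
theorem abel_pos (b : ℕ → ℂ) (hb : Summable fun n => ‖b n‖)
    (hb2 : Summable fun n : ℕ => (n : ℝ) ^ 2 * ‖b n‖) (T : ℕ → ℂ)
    (hT : ∀ j, HasSum (fun i => b (i + j)) (T j)) (S : ℝ)
    (hS : HasSum (fun m : ℕ => (m : ℝ) ^ 2 * (‖T m‖ ^ 2 - ‖T (m + 1)‖ ^ 2)) S) (j : ℕ) :
    (2 * j + 1 : ℝ) * ‖T (j + 1)‖ ^ 2 ≤ S := by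
  have key : ∀ M : ℕ, ∑ m ∈ Finset.range (M + 1), (m : ℝ) ^ 2 * (‖T m‖ ^ 2 - ‖T (m + 1)‖ ^ 2)
      = ∑ m ∈ Finset.range M, (2 * m + 1 : ℝ) * ‖T (m + 1)‖ ^ 2 - (M * ‖T (M + 1)‖) ^ 2 := by
    intro M
    induction M with
    | zero => simp
    | succ M ih =>
      rw [Finset.sum_range_succ, ih, Finset.sum_range_succ _ M]
      push_cast
      ring
  have hR := tendsto_sum_nat_add (fun n : ℕ => (n : ℝ) ^ 2 * ‖b n‖)
  have hbd : ∀ M : ℕ, (M : ℝ) * ‖T (M + 1)‖ ≤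
      ∑' k, (((k + (M + 1) : ℕ) : ℝ) ^ 2 * ‖b (k + (M + 1))‖) := by
    intro M
    have h1 : Summable fun k => ‖b (k + (M + 1))‖ := (summable_nat_add_iff (M + 1)).2 hb
    have h2 : Summable fun k => (((k + (M + 1) : ℕ) : ℝ) ^ 2 * ‖b (k + (M + 1))‖) :=
      (summable_nat_add_iff (f := fun n : ℕ => (n : ℝ) ^ 2 * ‖b n‖) (M + 1)).2 hb2
    calc (M : ℝ) * ‖T (M + 1)‖ ≤ M * ∑' k, ‖b (k + (M + 1))‖ := by
          gcongr
          rw [← (hT (M + 1)).tsum_eq]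
          exact norm_tsum_le_tsum_norm h1
      _ = ∑' k, M * ‖b (k + (M + 1))‖ := tsum_mul_left.symm
      _ ≤ _ := by
          refine Summable.tsum_le_tsum (fun k => ?_) (h1.mul_left _) h2
          gcongr
          push_cast
          have : (0 : ℝ) ≤ k := by positivity
          have : (0 : ℝ) ≤ M := by positivity
          nlinarith
  have h0 : Tendsto (fun M : ℕ => (M : ℝ) * ‖T (M + 1)‖) atTop (𝓝 0) :=
    squeeze_zero (fun M => by positivity) hbd ((tendsto_add_atTop_iff_nat 1).2 hR)
  have hlim : Tendsto (fun M : ℕ => ∑ m ∈ Finset.range M, (2 * m + 1 : ℝ) * ‖T (m + 1)‖ ^ 2)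
      atTop (𝓝 S) := by
    have := ((tendsto_add_atTop_iff_nat 1).2 hS.tendsto_sum_nat).add (h0.pow 2)
    simp only [key] at this
    simpa using this
  refine ge_of_tendsto hlim ?_
  filter_upwards [eventually_gt_atTop j] with M hM
  exact Finset.single_le_sum (f := fun m : ℕ => (2 * m + 1 : ℝ) * ‖T (m + 1)‖ ^ 2)
    (fun i _ => by positivity) (Finset.mem_range.2 hM)

/-- inner sums -/
theorem inner_row_sum (a : ℤ → ℂ) (ha : Summable fun n => ‖a n‖)
    (hconj : ∀ n, a (-n) = (starRingEnd ℂ) (a n)) (T : ℕ → ℂ)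
    (hT : ∀ j : ℕ, HasSum (fun i : ℕ => a ((i + j : ℕ) : ℤ)) (T j)) (m : ℕ) :
    HasSum (fun n : ℤ => (1 - (((n + m : ℤ).sign : ℤ) : ℂ) * (((m : ℤ).sign : ℤ) : ℂ))
      * ((m : ℤ) : ℂ) ^ 2 * (a n * a m))
      ((m : ℂ) ^ 2 * (a m * (starRingEnd ℂ) (a m + 2 * T (m + 1)))) := by
  rcases Nat.eq_zero_or_pos m with rfl | hm
  · simpa using hasSum_zero
  have hinj : Function.Injective (fun i : ℕ => -((i + m : ℕ) : ℤ)) := by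
    intro i j h
    simp at h
    exact h
  rw [← hinj.hasSum_iff]
  · rw [← hasSum_nat_add_iff' 1]
    have h1 := hT (m + 1)
    have h2 := (((Complex.hasSum_conj').2 h1).mul_left ((m : ℂ) ^ 2 * a m * 2))
    refine hs_congr h2 (fun i => ?_) ?_
    · simp only [Function.comp, hconj]
      have h3 : (-((i + 1 + m : ℕ) : ℤ) + m).sign = -1 := by
        apply Int.sign_eq_neg_one_of_neg; push_cast; omega
      have h4 : ((m : ℕ) : ℤ).sign = 1 := Int.sign_eq_one_of_pos (by omega)
      have h5 : i + 1 + m = i + (m + 1) := by ring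
      rw [h3, h4, h5]
      push_cast
      ring
    · have h4 : ((m : ℕ) : ℤ).sign = 1 := Int.sign_eq_one_of_pos (by omega)
      simp [hconj, Complex.conj_ofNat]
      ring
  · intro n hn
    have : 0 < n + m := by
      by_contra hneg
      apply hn
      refine ⟨(-n - m).toNat, ?_⟩
      simp only
      omega
    rw [Int.sign_eq_one_of_pos this, Int.sign_eq_one_of_pos (by omega : (0:ℤ) < m)]
    simp

theorem core_pos (a : ℤ → ℂ) (ha : Summable fun n => ‖a n‖)
    (ha2 : Summable fun n : ℤ => (n : ℝ) ^ 2 * ‖a n‖)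
    (hconj : ∀ n, a (-n) = (starRingEnd ℂ) (a n)) (S : ℂ)
    (hS : HasSum (fun p : ℤ × ℤ => (1 - (((p.1 + p.2 : ℤ).sign : ℤ) : ℂ) * (((p.2).sign : ℤ) : ℂ))
      * (p.2 : ℂ) ^ 2 * (a p.1 * a p.2)) S) (hne : ∃ n, n ≠ 0 ∧ a n ≠ 0) : 0 < S.re := by
  have hb : Summable fun n : ℕ => ‖a n‖ := ha.comp_injective Nat.cast_injective
  have hb2 : Summable fun n : ℕ => (n : ℝ) ^ 2 * ‖a n‖ := by
    simpa [Function.comp_def] using ha2.comp_injective (Nat.cast_injective (R := ℤ))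
  let T : ℕ → ℂ := fun j => ∑' i : ℕ, a ((i + j : ℕ) : ℤ)
  have hT : ∀ j : ℕ, HasSum (fun i : ℕ => a ((i + j : ℕ) : ℤ)) (T j) := fun j =>
    ((summable_nat_add_iff (f := fun n : ℕ => a n) j).2 hb.of_norm).hasSum
  have hTs : ∀ j : ℕ, T j = a j + T (j + 1) := by
    intro j
    have h1 := (hasSum_nat_add_iff' 1).2 (hT j)
    have h2 := hT (j + 1)
    have h3 : (fun i : ℕ => a ((i + 1 + j : ℕ) : ℤ)) = fun i : ℕ => a ((i + (j + 1) : ℕ) : ℤ) := by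
      ext i; congr 2; ring
    rw [h3] at h1
    have := h1.unique h2
    simp at this
    rw [← this]; ring
  let B : ℕ → ℂ := fun m => (m : ℂ) ^ 2 * (a m * (starRingEnd ℂ) (a m + 2 * T (m + 1)))
  have hpos := inner_row_sum a ha hconj T hT
  have hneg : ∀ m : ℕ, HasSum (fun n : ℤ => (1 - (((n + -m : ℤ).sign : ℤ) : ℂ) *
      (((-m : ℤ).sign : ℤ) : ℂ)) * ((-m : ℤ) : ℂ) ^ 2 * (a n * a (-m))) ((starRingEnd ℂ) (B m)) := by
    intro m
    have h1 := (Complex.hasSum_conj').2 (hpos m)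
    rw [← (Equiv.neg ℤ).hasSum_iff] at h1
    refine hs_congr h1 (fun n => ?_) rfl
    have h3 : (-n + (m : ℤ)).sign = - (n + -m).sign := by
      rw [← Int.sign_neg]; congr 1; ring
    simp only [Function.comp, Equiv.neg_apply, map_mul, map_sub, map_one, map_pow, h3, ← hconj,
      Int.sign_neg, neg_neg]
    simp
  have hS' := (Equiv.prodComm ℤ ℤ).hasSum_iff.2 hS
  let G : ℤ → ℂ := fun m => ∑' n : ℤ, (1 - (((n + m : ℤ).sign : ℤ) : ℂ) *
      (((m : ℤ).sign : ℤ) : ℂ)) * ((m : ℤ) : ℂ) ^ 2 * (a n * a m)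
  have hGpos : ∀ m : ℕ, G m = B m := fun m => (hpos m).tsum_eq
  have hGneg : ∀ m : ℕ, G (-m) = (starRingEnd ℂ) (B m) := fun m => (hneg m).tsum_eq
  have hG : HasSum G S := by
    refine hS'.prod_fiberwise fun m => ?_
    apply Summable.hasSum
    rcases Int.eq_nat_or_neg m with ⟨k, rfl | rfl⟩
    · exact (hpos k).summable
    · exact (hneg k).summable
  have hG2 := Complex.hasSum_re hG.nat_add_neg
  have hB : HasSum (fun m : ℕ => (m : ℝ) ^ 2 * (‖T m‖ ^ 2 - ‖T (m + 1)‖ ^ 2)) (S.re / 2) := by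
    have h := hG2.div_const 2
    refine hs_congr h (fun m => ?_) ?_
    · rw [hGpos, hGneg, hTs m]
      have : ((B m + (starRingEnd ℂ) (B m)).re) / 2 = (B m).re := by simp
      rw [this]
      simp only [B, ← Complex.normSq_eq_norm_sq, Complex.normSq_apply]
      have : ((m : ℂ) ^ 2) = (((m : ℝ) ^ 2 : ℝ) : ℂ) := by push_cast; rfl
      rw [this, Complex.re_ofReal_mul]
      simp
      ring_nf
      simp
    · have : G 0 = 0 := by
        have := hGpos 0
        simpa [B] using this
      simp [this]
  have hfin := abel_pos (fun n => a n) hb hb2 T hT _ hB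
  have h0 : 0 ≤ S.re / 2 := le_trans (by positivity) (hfin 0)
  by_contra hle
  have hz : S.re / 2 = 0 := by linarith
  have hTz : ∀ j, T (j + 1) = 0 := by
    intro j
    have := hfin j
    rw [hz] at this
    have h3 : ‖T (j + 1)‖ ^ 2 ≤ 0 := by
      by_contra h
      have : 0 < (2 * j + 1 : ℝ) * ‖T (j + 1)‖ ^ 2 := mul_pos (by positivity) (not_le.1 h)
      linarith
    have h4 : ‖T (j + 1)‖ = 0 := by nlinarith [norm_nonneg (T (j + 1))]
    simpa using h4
  have haz : ∀ j : ℕ, a ((j + 1 : ℕ) : ℤ) = 0 := by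
    intro j
    have := hTs (j + 1)
    rw [hTz, hTz] at this
    simpa using this.symm
  obtain ⟨n, hn, hn2⟩ := hne
  rcases Int.eq_nat_or_neg n with ⟨k, rfl | rfl⟩
  · obtain ⟨j, rfl⟩ := Nat.exists_eq_succ_of_ne_zero (by simpa using hn : k ≠ 0)
    exact hn2 (haz j)
  · obtain ⟨j, rfl⟩ := Nat.exists_eq_succ_of_ne_zero (by simpa using hn : k ≠ 0)
    apply hn2
    rw [hconj, haz j, map_zero]

theorem fourierC_bound (f : ℝ → ℝ) (hf : Continuous f) : ∃ C, ∀ n, ‖fourierC f n‖ ≤ C := by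
  obtain ⟨C, hC⟩ := isCompact_Icc.exists_bound_of_continuousOn (s := Set.Icc 0 (2 * π)) hf.continuousOn
  refine ⟨‖((1 / (2 * π) : ℂ))‖ * (C * |2 * π - 0|), fun n => ?_⟩
  unfold fourierC
  rw [norm_mul]
  gcongr
  apply intervalIntegral.norm_integral_le_of_norm_le_const
  intro x hx
  have hx' : x ∈ Set.Icc 0 (2 * π) := by
    rw [Set.uIoc_of_le (by positivity)] at hx
    exact ⟨hx.1.le, hx.2⟩
  have h1 : ‖Complex.exp (-Complex.I * (n : ℂ) * (x : ℂ))‖ = 1 := by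
    rw [Complex.norm_exp]; simp
  rw [norm_mul, h1, mul_one, Complex.norm_real]
  exact hC x hx'

theorem fourierC_neg (f : ℝ → ℝ) (n : ℤ) : fourierC f (-n) = (starRingEnd ℂ) (fourierC f n) := by
  unfold fourierC
  rw [map_mul, ← intervalIntegral.intervalIntegral_conj]
  congr 1
  · simp [Complex.conj_ofNat]
  · congr 1
    ext x
    rw [map_mul, ← Complex.exp_conj]
    simp

theorem exp_per (n : ℤ) : Complex.exp (-Complex.I * (n : ℂ) * ((2 * π : ℝ) : ℂ)) = 1 := by
  rw [Complex.exp_eq_one_iff]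
  exact ⟨-n, by push_cast; ring⟩

theorem fourierC_deriv (f : ℝ → ℝ) (hf : ContDiff ℝ (⊤ : ℕ∞) f)
    (hper : ∀ θ : ℝ, f (θ + 2 * π) = f θ) (n : ℤ) :
    fourierC (deriv f) n = Complex.I * n * fourierC f n := by
  have hd : ∀ x, HasDerivAt (fun x : ℝ => (f x : ℂ)) ((deriv f x : ℝ) : ℂ) x := fun x =>
    ((hf.differentiable (by simp)) x).hasDerivAt.ofReal_comp
  have he : ∀ x : ℝ, HasDerivAt (fun x : ℝ => Complex.exp (-Complex.I * (n : ℂ) * (x : ℂ)))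
      (Complex.exp (-Complex.I * (n : ℂ) * (x : ℂ)) * (-Complex.I * n)) x := by
    intro x
    have h1 : HasDerivAt (fun x : ℝ => -Complex.I * (n : ℂ) * (x : ℂ)) (-Complex.I * n) x := by
      simpa using (Complex.ofRealCLM.hasDerivAt (x := x)).const_mul (-Complex.I * (n : ℂ))
    exact h1.cexp
  have hc : Continuous (deriv f) := hf.continuous_deriv (by simp)
  have h := intervalIntegral.integral_mul_deriv_eq_deriv_mul (a := 0) (b := 2 * π)
    (fun x _ => he x) (fun x _ => hd x)
    (by apply Continuous.intervalIntegrable; fun_prop)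
    (by apply Continuous.intervalIntegrable; fun_prop)
  have h0 : f (2 * π) = f 0 := by simpa using hper 0
  rw [exp_per, h0] at h
  unfold fourierC
  have e1 : (∫ θ in (0:ℝ)..(2 * π), ((deriv f θ : ℝ) : ℂ) * Complex.exp (-Complex.I * (n : ℂ) * (θ : ℂ)))
      = ∫ θ in (0:ℝ)..(2 * π), Complex.exp (-Complex.I * (n : ℂ) * (θ : ℂ)) * ((deriv f θ : ℝ) : ℂ) := by
    congr 1; ext x; ring
  have e2 : (∫ θ in (0:ℝ)..(2 * π), Complex.exp (-Complex.I * (n : ℂ) * (θ : ℂ)) * (-Complex.I * n) * (f θ : ℂ))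
      = (-Complex.I * n) * ∫ θ in (0:ℝ)..(2 * π), (f θ : ℂ) * Complex.exp (-Complex.I * (n : ℂ) * (θ : ℂ)) := by
    rw [← intervalIntegral.integral_const_mul]
    congr 1; ext x; ring
  rw [e1, h, e2]
  simp
  ring

theorem smooth_deriv (f : ℝ → ℝ) (hf : ContDiff ℝ (⊤ : ℕ∞) f) :
    ContDiff ℝ (⊤ : ℕ∞) (deriv f) := (contDiff_infty_iff_deriv.1 hf).2

theorem per_deriv (f : ℝ → ℝ) (hper : ∀ θ : ℝ, f (θ + 2 * π) = f θ) :
    ∀ θ : ℝ, deriv f (θ + 2 * π) = deriv f θ := by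
  intro θ
  rw [← deriv_comp_add_const]
  congr 1
  ext x; exact hper x

theorem fourierC_deriv2 (f : ℝ → ℝ) (hf : ContDiff ℝ (⊤ : ℕ∞) f)
    (hper : ∀ θ : ℝ, f (θ + 2 * π) = f θ) (n : ℤ) :
    fourierC (deriv (deriv f)) n = - (n : ℂ) ^ 2 * fourierC f n := by
  rw [fourierC_deriv _ (smooth_deriv f hf) (per_deriv f hper), fourierC_deriv f hf hper]
  linear_combination (n : ℂ) ^ 2 * fourierC f n * Complex.I_sq

theorem fourierC_summable (f : ℝ → ℝ) (hf : ContDiff ℝ (⊤ : ℕ∞) f)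
    (hper : ∀ θ : ℝ, f (θ + 2 * π) = f θ) : Summable fun n => ‖fourierC f n‖ := by
  obtain ⟨C, hC⟩ := fourierC_bound _ (smooth_deriv _ (smooth_deriv f hf)).continuous
  have h1 : Summable fun n : ℤ => C * (1 / (n : ℝ) ^ 2) :=
    (Real.summable_one_div_int_pow.2 (by norm_num)).mul_left C
  refine Summable.of_norm_bounded_eventually h1 ?_
  have : ∀ᶠ n : ℤ in Filter.cofinite, n ≠ 0 := by
    rw [Filter.eventually_cofinite]
    simp
  filter_upwards [this] with n hn
  have h2 := hC n
  rw [fourierC_deriv2 f hf hper, norm_mul] at h2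
  have hn' : (0 : ℝ) < (n : ℝ) ^ 2 := by positivity
  have h3 : ‖-(n : ℂ) ^ 2‖ = (n : ℝ) ^ 2 := by
    rw [norm_neg, norm_pow, Complex.norm_intCast, sq_abs]
  rw [h3] at h2
  rw [norm_norm, mul_one_div, le_div_iff₀ hn']
  linarith

theorem fourier_inversion (f : ℝ → ℝ) (hf : ContDiff ℝ (⊤ : ℕ∞) f)
    (hper : ∀ θ : ℝ, f (θ + 2 * π) = f θ) (x : ℝ) :
    HasSum (fun n : ℤ => fourierC f n * Complex.exp (Complex.I * (n : ℂ) * (x : ℂ))) (f x : ℂ) := by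
  haveI : Fact (0 < 2 * π) := ⟨by positivity⟩
  have hp : Function.Periodic (fun x : ℝ => (f x : ℂ)) (2 * π) := fun x => by simp [hper]
  have hcont : Continuous (fun x : ℝ => (f x : ℂ)) := Complex.continuous_ofReal.comp hf.continuous
  let g : C(AddCircle (2 * π), ℂ) := ⟨hp.lift, hcont.quotient_liftOn' _⟩
  have hg : ∀ y : ℝ, g (y : AddCircle (2 * π)) = (f y : ℂ) := fun y => hp.lift_coe y
  have hexp : ∀ (n : ℤ) (y : ℝ), fourier n (y : AddCircle (2 * π)) =
      Complex.exp (Complex.I * (n : ℂ) * (y : ℂ)) := by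
    intro n y
    rw [fourier_coe_apply]
    congr 1
    have : (π : ℂ) ≠ 0 := by exact_mod_cast Real.pi_ne_zero
    push_cast
    field_simp
  have hco : ∀ n, fourierCoeff g n = fourierC f n := by
    intro n
    rw [fourierCoeff_eq_intervalIntegral g n 0, fourierC, zero_add, Complex.real_smul]
    congr 1
    · push_cast; rfl
    · congr 1
      ext y
      rw [hexp, hg, smul_eq_mul, mul_comm]
      congr 2
      push_cast; ring
  have hs : Summable (fourierCoeff g) := by
    rw [funext hco]
    exact (fourierC_summable f hf hper).of_norm
  have := has_pointwise_sum_fourier_series_of_summable hs (x : AddCircle (2 * π))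
  simpa only [hco, hexp, hg, smul_eq_mul] using this

theorem int_exp (k : ℤ) : (1 / (2 * π) : ℂ) * ∫ x in (0:ℝ)..(2 * π),
    Complex.exp (Complex.I * (k : ℂ) * (x : ℂ)) = if k = 0 then 1 else 0 := by
  have hpi : (π : ℂ) ≠ 0 := by exact_mod_cast Real.pi_ne_zero
  split_ifs with h
  · subst h
    simp
    field_simp
  · have hk : Complex.I * (k : ℂ) ≠ 0 := mul_ne_zero Complex.I_ne_zero (by exact_mod_cast h)
    rw [integral_exp_mul_complex hk]
    have := exp_per (-k)
    push_cast at this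
    have h2 : Complex.exp (Complex.I * k * ((2 * π : ℝ) : ℂ)) = 1 := by
      rw [← this]; congr 1; push_cast; ring
    rw [h2]
    simp

theorem norm_exp_I (k : ℤ) (x : ℝ) : ‖Complex.exp (Complex.I * (k : ℂ) * (x : ℂ))‖ = 1 := by
  rw [Complex.norm_exp]; simp

theorem fourierC_of_hasSum {ι : Type} [Countable ι] (f : ℝ → ℝ) (a : ι → ℂ) (N : ι → ℤ)
    (ha : Summable fun i => ‖a i‖)
    (hf : ∀ x : ℝ, HasSum (fun i => a i * Complex.exp (Complex.I * (N i : ℂ) * (x : ℂ))) (f x : ℂ))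
    (k : ℤ) : HasSum (fun i => if N i = k then a i else 0) (fourierC f k) := by
  have key : HasSum (fun i => ∫ x in (0:ℝ)..(2 * π), a i * Complex.exp (Complex.I * ((N i - k : ℤ) : ℂ) * (x : ℂ)))
      (∫ x in (0:ℝ)..(2 * π), (f x : ℂ) * Complex.exp (-Complex.I * (k : ℂ) * (x : ℂ))) := by
    apply intervalIntegral.hasSum_integral_of_dominated_convergence (fun i _ => ‖a i‖)
    · intro i
      apply Continuous.aestronglyMeasurable
      fun_prop
    · intro i
      refine Filter.Eventually.of_forall fun x _ => ?_
      rw [norm_mul, norm_exp_I, mul_one]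
    · exact Filter.Eventually.of_forall fun x _ => ha
    · exact intervalIntegrable_const
    · refine Filter.Eventually.of_forall fun x _ => ?_
      refine hs_congr ((hf x).mul_right (Complex.exp (-Complex.I * (k : ℂ) * (x : ℂ)))) (fun i => ?_) rfl
      rw [mul_assoc (a i), ← Complex.exp_add]
      congr 2
      push_cast; ring
  have := key.mul_left (1 / (2 * π) : ℂ)
  unfold fourierC
  refine hs_congr this (fun i => ?_) rfl
  rw [intervalIntegral.integral_const_mul, mul_left_comm, int_exp]
  simp [sub_eq_zero]

theorem hilbertT_of_hasSum {ι : Type} [Countable ι] (f : ℝ → ℝ) (a : ι → ℂ) (N : ι → ℤ)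
    (ha : Summable fun i => ‖a i‖)
    (hf : ∀ x : ℝ, HasSum (fun i => a i * Complex.exp (Complex.I * (N i : ℂ) * (x : ℂ))) (f x : ℂ))
    (θ : ℝ) (S : ℂ) (hS : HasSum (fun i => -Complex.I * (((N i).sign : ℤ) : ℂ) * a i *
      Complex.exp (Complex.I * (N i : ℂ) * (θ : ℂ))) S) : hilbertT f θ = S.re := by
  unfold hilbertT
  congr 1
  apply HasSum.tsum_eq
  have h1 := (Equiv.sigmaFiberEquiv N).hasSum_iff.2 hS
  refine h1.sigma fun k => ?_
  have h2 := ((fourierC_of_hasSum f a N ha hf k).mul_left (-Complex.I * ((k.sign : ℤ) : ℂ))).mul_right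
    (Complex.exp (Complex.I * (k : ℂ) * (θ : ℂ)))
  have h3 : HasSum ((fun i => -Complex.I * (((N i).sign : ℤ) : ℂ) * a i *
      Complex.exp (Complex.I * (N i : ℂ) * (θ : ℂ))) ∘ (Subtype.val : {i | N i = k} → ι))
      (-Complex.I * ((k.sign : ℤ) : ℂ) * fourierC f k * Complex.exp (Complex.I * (k : ℂ) * (θ : ℂ))) := by
    rw [hasSum_subtype_iff_indicator]
    refine hs_congr h2 (fun i => ?_) rfl
    by_cases h : N i = k
    · simp [Set.indicator, h]
    · simp [Set.indicator, h]
  exact h3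

theorem real_of_conj_sum (s : ℤ → ℂ) (hs : ∀ n, s (-n) = (starRingEnd ℂ) (s n)) (S : ℂ)
    (hS : HasSum s S) : ((S.re : ℝ) : ℂ) = S := by
  have h1 := (Equiv.neg ℤ).hasSum_iff.2 hS
  have h2 := (Complex.hasSum_conj').2 hS
  have h3 : s ∘ (Equiv.neg ℤ) = fun n => (starRingEnd ℂ) (s n) := by
    ext n; simp [hs]
  rw [h3] at h1
  exact (Complex.conj_eq_iff_re.1 (h2.unique h1))

theorem hs_mul (f g : ℤ → ℂ) (a b : ℂ) (hf : HasSum f a) (hg : HasSum g b)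
    (hs : Summable fun p : ℤ × ℤ => f p.1 * g p.2) :
    HasSum (fun p : ℤ × ℤ => f p.1 * g p.2) (a * b) := hf.mul hg hs

set_option maxHeartbeats 1000000 in
/-- For smooth nonconstant mean-zero `u : S¹ → ℝ`,
the function `F = −u·u″ − H(u·H(u″))` is everywhere positive. -/
theorem Fmagic_pos (u : ℝ → ℝ)
    (hu : ContDiff ℝ (⊤ : ℕ∞) u)
    (hper : ∀ θ : ℝ, u (θ + 2 * π) = u θ)
    (hmean : (∫ θ in (0:ℝ)..(2 * π), u θ) = 0)
    (hnonconst : ∃ a b : ℝ, u a ≠ u b) :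
    ∀ θ : ℝ, 0 < Fmagic u θ := by
  intro θ
  set c : ℤ → ℂ := fourierC u with hc
  have hu2 := smooth_deriv _ (smooth_deriv u hu)
  have hper2 := per_deriv _ (per_deriv u hper)
  have hcs : Summable fun n => ‖c n‖ := fourierC_summable u hu hper
  have hcc : ∀ n, c (-n) = (starRingEnd ℂ) (c n) := fourierC_neg u
  have hc2 : ∀ n, fourierC (deriv (deriv u)) n = -(n : ℂ) ^ 2 * c n := fourierC_deriv2 u hu hper
  have hcs2 : Summable fun n : ℤ => (n : ℝ) ^ 2 * ‖c n‖ := by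
    have := fourierC_summable _ hu2 hper2
    refine this.congr fun n => ?_
    rw [hc2, norm_mul, norm_neg, norm_pow, Complex.norm_intCast, sq_abs]
  have hU : ∀ x : ℝ, HasSum (fun n : ℤ => c n * Complex.exp (Complex.I * (n : ℂ) * (x : ℂ))) (u x : ℂ) :=
    fourier_inversion u hu hper
  have hU2 : ∀ x : ℝ, HasSum (fun n : ℤ => -(n : ℂ) ^ 2 * c n * Complex.exp (Complex.I * (n : ℂ) * (x : ℂ)))
      ((deriv (deriv u) x : ℝ) : ℂ) := by
    intro x
    simpa only [hc2] using fourier_inversion _ hu2 hper2 x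
  -- the coefficients of the transformed second derivative
  let d : ℤ → ℂ := fun n => Complex.I * ((n.sign : ℤ) : ℂ) * (n : ℂ) ^ 2 * c n
  have hdn : ∀ n, ‖d n‖ ≤ (n : ℝ) ^ 2 * ‖c n‖ := by
    intro n
    simp only [d, norm_mul, norm_pow, Complex.norm_I, one_mul, Complex.norm_intCast, sq_abs]
    have h1 : |((n.sign : ℤ) : ℝ)| ≤ 1 := by
      rcases lt_trichotomy n 0 with h | h | h
      · simp [Int.sign_eq_neg_one_of_neg h]
      · simp [h]
      · simp [Int.sign_eq_one_of_pos h]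
    have h2 : 0 ≤ (n : ℝ) ^ 2 * ‖c n‖ := by positivity
    nlinarith
  have hds : Summable fun n => ‖d n‖ :=
    Summable.of_nonneg_of_le (fun n => norm_nonneg _) hdn hcs2
  have hV : ∀ x : ℝ, HasSum (fun n : ℤ => d n * Complex.exp (Complex.I * (n : ℂ) * (x : ℂ)))
      (hilbertT (deriv (deriv u)) x : ℂ) := by
    intro x
    have hsum : Summable (fun n : ℤ => d n * Complex.exp (Complex.I * (n : ℂ) * (x : ℂ))) := by
      apply Summable.of_norm
      simpa only [norm_mul, norm_exp_I, mul_one] using hds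
    obtain ⟨S, hS⟩ := hsum
    have h1 : hilbertT (deriv (deriv u)) x = S.re := by
      refine hilbertT_of_hasSum (deriv (deriv u)) (fun n : ℤ => -(n : ℂ) ^ 2 * c n) id ?_ hU2 x S ?_
      · refine hcs2.congr fun n => ?_
        rw [norm_mul, norm_neg, norm_pow, Complex.norm_intCast, sq_abs]
      · refine hs_congr hS (fun n => ?_) rfl
        simp only [d, id]
        ring
    rw [h1, real_of_conj_sum _ _ S hS]
    · exact hS
    · intro n
      rw [map_mul, ← Complex.exp_conj]
      simp [d, hcc, Int.sign_neg]
  -- the product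
  obtain ⟨a, haeq⟩ : ∃ a : ℤ → ℂ, ∀ n, a n = c n * Complex.exp (Complex.I * (n : ℂ) * (θ : ℂ)) :=
    ⟨_, fun _ => rfl⟩
  have han : ∀ n, ‖a n‖ = ‖c n‖ := fun n => by
    simp only [haeq, norm_mul, norm_exp_I, mul_one]
  have hcd : Summable fun p : ℤ × ℤ => ‖c p.1 * d p.2‖ := by
    simpa only [norm_mul] using hcs.mul_of_nonneg hds (fun _ => norm_nonneg _) (fun _ => norm_nonneg _)
  have hprod : ∀ x : ℝ, HasSum (fun p : ℤ × ℤ => c p.1 * d p.2 *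
      Complex.exp (Complex.I * ((p.1 + p.2 : ℤ) : ℂ) * (x : ℂ)))
      ((u x * hilbertT (deriv (deriv u)) x : ℝ) : ℂ) := by
    intro x
    have hs : Summable (fun p : ℤ × ℤ => (c p.1 * Complex.exp (Complex.I * (p.1 : ℂ) * (x : ℂ))) *
        (d p.2 * Complex.exp (Complex.I * (p.2 : ℂ) * (x : ℂ)))) := by
      apply Summable.of_norm
      refine hcd.congr fun p => ?_
      simp only [norm_mul, norm_exp_I, mul_one]
    have := (hU x).mul (hV x) hs
    push_cast
    refine hs_congr this (fun p => ?_) rfl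
    rw [mul_mul_mul_comm, ← Complex.exp_add]
    congr 2
    ring
  have hHs : Summable (fun p : ℤ × ℤ => -Complex.I * (((p.1 + p.2).sign : ℤ) : ℂ) * (c p.1 * d p.2) *
      Complex.exp (Complex.I * ((p.1 + p.2 : ℤ) : ℂ) * (θ : ℂ))) := by
    apply Summable.of_norm
    refine Summable.of_nonneg_of_le (fun _ => norm_nonneg _) (fun p => ?_) hcd
    rw [norm_mul, norm_exp_I, mul_one, norm_mul, norm_mul, norm_neg, Complex.norm_I, one_mul,
      Complex.norm_intCast]
    have h1 : |(((p.1 + p.2).sign : ℤ) : ℝ)| ≤ 1 := by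
      rcases lt_trichotomy (p.1 + p.2) 0 with h | h | h
      · simp [Int.sign_eq_neg_one_of_neg h]
      · simp [h]
      · simp [Int.sign_eq_one_of_pos h]
    nlinarith [norm_nonneg (c p.1 * d p.2)]
  obtain ⟨S, hS⟩ := hHs
  have hH : hilbertT (fun x => u x * hilbertT (deriv (deriv u)) x) θ = S.re :=
    hilbertT_of_hasSum _ (fun p : ℤ × ℤ => c p.1 * d p.2) (fun p => p.1 + p.2) hcd hprod θ S hS
  have hW : HasSum (fun p : ℤ × ℤ => a p.1 * (-(p.2 : ℂ) ^ 2 * a p.2))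
      ((u θ : ℂ) * ((deriv (deriv u) θ : ℝ) : ℂ)) := by
    have hs : Summable (fun p : ℤ × ℤ => a p.1 * (-(p.2 : ℂ) ^ 2 * a p.2)) := by
      apply Summable.of_norm
      have := hcs.mul_of_nonneg hcs2 (fun _ => norm_nonneg _) (fun _ => by positivity)
      refine this.congr fun p => ?_
      rw [norm_mul, norm_mul, han, han, norm_neg, norm_pow, Complex.norm_intCast, sq_abs]
    have hUa : HasSum a (u θ : ℂ) := hs_congr (hU θ) haeq rfl
    have hU2a : HasSum (fun n : ℤ => -(n : ℂ) ^ 2 * a n) ((deriv (deriv u) θ : ℝ) : ℂ) := by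
      refine hs_congr (hU2 θ) (fun n => ?_) rfl
      rw [haeq]; ring
    exact hs_mul a (fun n : ℤ => -(n : ℂ) ^ 2 * a n) _ _ hUa hU2a hs
  have hF : Fmagic u θ = (-((u θ : ℂ) * ((deriv (deriv u) θ : ℝ) : ℂ)) - S).re := by
    unfold Fmagic
    rw [hH]
    simp
  rw [hF]
  apply core_pos a
  · simpa only [han] using hcs
  · simpa only [han] using hcs2
  · intro n
    simp only [haeq]
    rw [map_mul, ← Complex.exp_conj, hcc]
    simp
  · refine hs_congr (hW.neg.sub hS) (fun p => ?_) rfl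
    simp only [haeq, d]
    have : Complex.exp (Complex.I * ((p.1 + p.2 : ℤ) : ℂ) * (θ : ℂ)) =
        Complex.exp (Complex.I * (p.1 : ℂ) * (θ : ℂ)) * Complex.exp (Complex.I * (p.2 : ℂ) * (θ : ℂ)) := by
      rw [← Complex.exp_add]; congr 1; push_cast; ring
    rw [this]
    ring_nf
    simp only [Complex.I_sq]
    ring
  · by_contra! hne
    have hcz : ∀ n, n ≠ 0 → c n = 0 := by
      intro n hn
      have := han n
      rw [hne n hn] at this
      simpa using this.symm
    have hconst : ∀ x : ℝ, (u x : ℂ) = c 0 := by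
      intro x
      have h1 := hasSum_single (f := fun n : ℤ => c n * Complex.exp (Complex.I * (n : ℂ) * (x : ℂ))) 0
        (fun n hn => by simp [hcz n hn])
      have := (hU x).unique h1
      simpa using this
    obtain ⟨x, y, hxy⟩ := hnonconst
    apply hxy
    have := (hconst x).trans (hconst y).symm
    exact_mod_cast this
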